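/- For every integer d ≥ 2 there is no strongly 2-unitary matrix of order d²: there exists no unitary matrix X : Matrix ((Fin d) × (Fin d)) ((Fin d) × (Fin d)) ℂ (i.e. X ⬝ Xᴴ = 1) satisfying both X = X^R and X = X^Γ. -/

import Mathlib

/-! Invariance under both operations makes `X ((a,b),(c,e))` symmetric in `b, c, e`, in particular
in `c, e`. The columns of `X` indexed by `(c,e)` and `(e,c)` therefore coincide; for `c ≠ e`, which
is possible once `d ≥ 2`, this contradicts the orthonormality of the columns of a unitary matrix. -/

open Matrix

/-- Reshuffling of a matrix describing a bipartite system: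
`X^R ((a,b),(c,e)) = X ((a,c),(b,e))`. -/
def reshuffle {n α : Type*} (X : Matrix (n × n) (n × n) α) : Matrix (n × n) (n × n) α :=
  fun p q => X (p.1, q.1) (p.2, q.2)

/-- Partial transpose of a matrix describing a bipartite system:
`X^Γ ((a,b),(c,e)) = X ((a,e),(c,b))`. -/
def ptrans {n α : Type*} (X : Matrix (n × n) (n × n) α) : Matrix (n × n) (n × n) α :=
  fun p q => X (p.1, q.2) (q.1, p.2)

/-- There is no strongly 2-unitary matrix of order `d²` for `d ≥ 2`. -/
theorem no_strongly_two_unitary (d : ℕ) (hd : 2 ≤ d) :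
    ¬ ∃ X : Matrix (Fin d × Fin d) (Fin d × Fin d) ℂ,
        X * Xᴴ = 1 ∧ X = reshuffle X ∧ X = ptrans X := by
  rintro ⟨X, hU, hR, hP⟩
  have hr : ∀ a b c e, X (a, b) (c, e) = X (a, c) (b, e) := fun a b c e =>
    congrFun (congrFun hR (a, b)) (c, e)
  have hp : ∀ a b c e, X (a, b) (c, e) = X (a, e) (c, b) := fun a b c e =>
    congrFun (congrFun hP (a, b)) (c, e)
  -- The transpositions `b ↔ c` and `b ↔ e` generate `c ↔ e`.
  have hs : ∀ (p : Fin d × Fin d) c e, X p (c, e) = X p (e, c) := fun p c e => by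
    rw [hr, hp, hr]
  have hU' : Xᴴ * X = 1 := mul_eq_one_comm.mp hU
  let i : Fin d := ⟨0, by omega⟩
  let j : Fin d := ⟨1, by omega⟩
  have hij : i ≠ j := by simp [i, j]
  have h₀ : (Xᴴ * X) (i, j) (j, i) = 0 := by
    rw [hU', one_apply_ne (by simp [hij])]
  have h₁ : (Xᴴ * X) (i, j) (i, j) = 1 := by
    rw [hU', one_apply_eq]
  have h : (Xᴴ * X) (i, j) (j, i) = (Xᴴ * X) (i, j) (i, j) := by
    simp only [mul_apply, hs _ j i]
  rw [h₀, h₁] at h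
  exact zero_ne_one h
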